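/- arXiv:2310.04814 — 2 statements merged into one kernel-verified Lean document; each statement's English description precedes it below -/
import Mathlib

section
/- Subtraction Theorem: Let U and V be theories in the same signature and φ a sentence such that (U + φ, V + φ) is an acceptable pair (where U + φ denotes U ∪ {φ}). If (U + φ, V + φ) is computably inseparable, then so is (U + φ, V); that is, if (U + φ)_p and (V + φ)_r are computably inseparable, then (U + φ)_p and V_r are computably inseparable. -/
open FirstOrder FirstOrder.Language

namespace PourEl

/-! ## Recursion-theoretic notions -/

/-- The `i`-th computably enumerable subset of `ℕ` (the domain of the `i`-th
partial computable function). -/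
def WSet (i : ℕ) : Set ℕ :=
  {n | ((Denumerable.ofNat Nat.Partrec.Code i).eval n).Dom}

/-- A set of natural numbers is computably enumerable. -/
def CE (A : Set ℕ) : Prop := ∃ i, A = WSet i

/-- A set of natural numbers is computable. -/
def Comp (A : Set ℕ) : Prop := ComputablePred (· ∈ A)

/-- Disjoint sets `X`, `Y` are computably separable iff some computable set
contains `X` and is disjoint from `Y`. -/
def CompSeparable (X Y : Set ℕ) : Prop :=
  ∃ Z : Set ℕ, Comp Z ∧ X ⊆ Z ∧ Y ∩ Z = ∅

/-- Computable inseparability. -/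
def CompInseparable (X Y : Set ℕ) : Prop := ¬ CompSeparable X Y

/-- `Z` and `W` weakly biseparate `X` and `Y`. -/
def WeaklyBiseparate {α : Type*} (Z W X Y : Set α) : Prop :=
  X ⊆ Z ∧ Y ⊆ W ∧ Z ∩ Y = ∅ ∧ W ∩ X = ∅

/-- `Z` and `W` biseparate `X` and `Y`. -/
def Biseparate {α : Type*} (Z W X Y : Set α) : Prop :=
  WeaklyBiseparate Z W X Y ∧ Z ∩ W = ∅

/-! ## Logical notions -/

variable {L : FirstOrder.Language}

/-- Provability: `φ` is a first-order consequence of `U` (by Gödel completeness,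
semantic consequence). -/
def Prv (U : L.Theory) (φ : L.Sentence) : Prop := U ⊨ᵇ φ

/-- `U_p`: the set of theorems of `U`. -/
def Thms (U : L.Theory) : Set L.Sentence := {φ | Prv U φ}

/-- `U_r`: the set of refutable sentences of `U`. -/
def Refut (U : L.Theory) : Set L.Sentence := {φ | Prv U ∼φ}

/-- Consistency: `U ⊬ ⊥`. -/
def Consistent (U : L.Theory) : Prop := ¬ Prv U ⊥

/-- `φ` is independent of `U`: `U` proves neither `φ` nor `¬φ`. -/
def Independent (U : L.Theory) (φ : L.Sentence) : Prop := ¬ Prv U φ ∧ ¬ Prv U ∼φ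

/-- `U` is incomplete: some sentence is independent of it. -/
def Incomplete (U : L.Theory) : Prop := ∃ φ, Independent U φ

/-- Mono-consequence: `U ⊢_m φ` iff `ψ ⊢ φ` for some `ψ ∈ U`. -/
def MPrv (U : L.Theory) (φ : L.Sentence) : Prop := ∃ ψ ∈ U, Prv {ψ} φ

/-- `U_m`: the set of mono-theorems of `U`. -/
def MThms (U : L.Theory) : Set L.Sentence := {φ | MPrv U φ}

/-- `U_n`: the set of mono-refutable sentences of `U`. -/
def MRefut (U : L.Theory) : Set L.Sentence := {φ | MPrv U ∼φ}

/-- Mono-consistency: every member is consistent by itself. -/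
def MonoConsistent (U : L.Theory) : Prop := ∀ ψ ∈ U, Consistent ({ψ} : L.Theory)

/-- `Û`: the set of all non-empty finite conjunctions of elements of `U`. -/
def hat (U : L.Theory) : L.Theory :=
  {φ | ∃ (ψ : L.Sentence) (l : List L.Sentence),
    ψ ∈ U ∧ (∀ χ ∈ l, χ ∈ U) ∧ φ = l.foldl (· ⊓ ·) ψ}

/-- `U ⋓ V`. -/
def Cup (U V : L.Theory) : L.Theory :=
  {χ | ∃ φ ∈ U, ∃ ψ ∈ V, χ = φ ⊓ ψ}

/-- `U ⋐ V`: for every `φ ∈ U` and `ψ ∈ V` there is `ρ ∈ V` with `ρ ⊢ φ ∧ ψ`. -/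
def Ssub (U V : L.Theory) : Prop :=
  ∀ φ ∈ U, ∀ ψ ∈ V, ∃ ρ ∈ V, Prv {ρ} (φ ⊓ ψ)

/-! ## Gödel numbering -/

/-- A Gödel numbering of the sentences of a (countable) signature: a bijective
coding of sentences by natural numbers that is effective for the basic syntactic
operations, and for which the theorems of a c.e. theory can be effectively
enumerated from an index of the theory. -/
structure Numbering (L : FirstOrder.Language) where
  equiv : L.Sentence ≃ ℕ
  neg_comp : Computable fun n => equiv ∼(equiv.symm n)
  inf_comp : Computable₂ fun m n => equiv (equiv.symm m ⊓ equiv.symm n)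
  imp_comp : Computable₂ fun m n => equiv (equiv.symm m ⟹ equiv.symm n)
  iff_comp : Computable₂ fun m n => equiv (equiv.symm m ⇔ equiv.symm n)
  thmIdx : ℕ → ℕ
  thmIdx_comp : Computable thmIdx
  thmIdx_spec : ∀ i, WSet (thmIdx i) = equiv '' Thms (equiv.symm '' WSet i)

namespace Numbering

variable (g : Numbering L)

/-- The code of a sentence. -/
def code (φ : L.Sentence) : ℕ := g.equiv φ

/-- The set of codes of a set of sentences. -/
def codes (S : Set L.Sentence) : Set ℕ := g.equiv '' S

/-- The theory axiomatised by the `i`-th c.e. set (identified with a set of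
sentences via the numbering). -/
def thy (i : ℕ) : L.Theory := g.equiv.symm '' WSet i

/-- The theory `U` is computably enumerable (with respect to the numbering). -/
def CEThy (U : L.Theory) : Prop := CE (g.codes U)

end Numbering

/-! Conjunction with `φ` is a computable map on sentences. It sends theorems of `U + φ` to theorems
of `U + φ`, and, by the deduction theorem, refutable sentences of `V + φ` to refutable sentences of
`V`. Pulling back along it, a computable separator of `(U + φ)_p` and `V_r` becomes one of
`(U + φ)_p` and `(V + φ)_r`. -/

theorem CompSeparable.of_mapsTo {X Y X' Y' : Set ℕ} {f : ℕ → ℕ} (h : CompSeparable X' Y')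
    (hf : Computable f) (hX : Set.MapsTo f X X') (hY : Set.MapsTo f Y Y') :
    CompSeparable X Y := by
  obtain ⟨Z, hZ, hXZ, hYZ⟩ := h
  refine ⟨f ⁻¹' Z, hZ.computable_of_manyOneReducible ⟨f, hf, fun _ ↦ Iff.rfl⟩,
    fun n hn ↦ hXZ (hX hn), ?_⟩
  rw [← Set.disjoint_iff_inter_eq_empty] at hYZ ⊢
  exact (hYZ.preimage f).mono_left hY

theorem CompInseparable.of_mapsTo {X Y X' Y' : Set ℕ} {f : ℕ → ℕ} (h : CompInseparable X Y)
    (hf : Computable f) (hX : Set.MapsTo f X X') (hY : Set.MapsTo f Y Y') :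
    CompInseparable X' Y' :=
  fun hsep ↦ h (hsep.of_mapsTo hf hX hY)

theorem mem_thms_of_mem {U : L.Theory} {φ : L.Sentence} (hφ : φ ∈ U) : φ ∈ Thms U :=
  Theory.models_sentence_of_mem hφ

theorem inf_mem_thms_iff {U : L.Theory} {φ ψ : L.Sentence} :
    φ ⊓ ψ ∈ Thms U ↔ φ ∈ Thms U ∧ ψ ∈ Thms U := by
  simp only [Thms, Prv, Set.mem_ofPred_eq, Theory.models_sentence_iff, Sentence.realize_inf,
    forall_and]

theorem prv_union_singleton_iff {U : L.Theory} {φ ψ : L.Sentence} :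
    Prv (U ∪ {φ}) ψ ↔ Prv U (φ ⟹ ψ) := by
  simp only [Prv, Theory.models_sentence_iff]
  constructor
  · intro h M
    refine (Sentence.realize_imp M).2 fun hφ ↦ ?_
    have : M ⊨ U ∪ {φ} := Theory.model_union_iff.2 ⟨M.is_model, Theory.model_singleton_iff.2 hφ⟩
    exact h (.of (U ∪ {φ}) M)
  · intro h M
    obtain ⟨_, hφ⟩ := Theory.model_union_iff.1 M.is_model
    exact (Sentence.realize_imp M).1 (h (.of U M)) (Theory.model_singleton_iff.1 hφ)

theorem inf_mem_refut_iff {U : L.Theory} {φ ψ : L.Sentence} :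
    φ ⊓ ψ ∈ Refut U ↔ ψ ∈ Refut (U ∪ {φ}) := by
  change Prv U ∼(φ ⊓ ψ) ↔ Prv (U ∪ {φ}) ∼ψ
  rw [prv_union_singleton_iff]
  simp only [Prv, Theory.models_sentence_iff, Sentence.realize_not, Sentence.realize_inf,
    Sentence.realize_imp, not_and]

namespace Numbering

theorem computable_inf_left (g : Numbering L) (φ : L.Sentence) :
    Computable fun n ↦ g.equiv (φ ⊓ g.equiv.symm n) := by
  simpa only [Equiv.symm_apply_apply, id] using
    g.inf_comp.comp (Computable.const (g.equiv φ)) Computable.id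

theorem mapsTo_codes (g : Numbering L) {S T : Set L.Sentence} {F : L.Sentence → L.Sentence}
    (hF : Set.MapsTo F S T) :
    Set.MapsTo (fun n ↦ g.equiv (F (g.equiv.symm n))) (g.codes S) (g.codes T) := by
  rintro _ ⟨ψ, hψ, rfl⟩
  simpa only [codes, Equiv.symm_apply_apply] using Set.mem_image_of_mem g.equiv (hF hψ)

end Numbering

/-- **Subtraction Theorem.** If `(U + φ, V + φ)` is an acceptable
pair and is computably inseparable, then so is `(U + φ, V)`. -/
theorem statement3 {L : FirstOrder.Language} (g : Numbering L) (U V : L.Theory)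
    (φ : L.Sentence)
    (hacc : Consistent ((U ∪ {φ}) ∪ (V ∪ {φ})))
    (h : CompInseparable (g.codes (Thms (U ∪ {φ}))) (g.codes (Refut (V ∪ {φ})))) :
    CompInseparable (g.codes (Thms (U ∪ {φ}))) (g.codes (Refut V)) := by
  have hφ : φ ∈ Thms (U ∪ {φ}) := mem_thms_of_mem (Or.inr rfl)
  have h_thms : Set.MapsTo (φ ⊓ ·) (Thms (U ∪ {φ})) (Thms (U ∪ {φ})) :=
    fun _ hψ ↦ inf_mem_thms_iff.2 ⟨hφ, hψ⟩
  have h_refut : Set.MapsTo (φ ⊓ ·) (Refut (V ∪ {φ})) (Refut V) :=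
    fun _ hψ ↦ inf_mem_refut_iff.2 hψ
  exact h.of_mapsTo (g.computable_inf_left φ) (g.mapsTo_codes h_thms) (g.mapsTo_codes h_refut)

end PourEl
end

section
/- Let U be a consistent c.e. theory and 𝒳 a set of sentences. Then U is effectively 𝒳-inseparable if and only if U is effectively uniformly essentially 𝒳-incomplete. -/
open FirstOrder FirstOrder.Language

namespace PourEl

/-! ## Logical notions -/

variable {L : FirstOrder.Language}

/-- `U` is effectively `X`-inseparable: a partial computable function uniformly
produces, from any pair of c.e. sets weakly biseparating `U_p` and `U_r`, a
sentence in `X` lying outside both. -/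
def EffXInseparable (g : Numbering L) (U : L.Theory) (X : Set L.Sentence) : Prop :=
  ∃ Φ : ℕ → ℕ →. ℕ, Partrec₂ Φ ∧ ∀ i j,
    WeaklyBiseparate (WSet i) (WSet j) (g.codes (Thms U)) (g.codes (Refut U)) →
    ∃ n ∈ Φ i j, n ∈ g.codes X ∧ n ∉ WSet i ∪ WSet j

/-- The `i`-th theory in the computable sequence of c.e. theories with index `j`
(a sequence is given by a c.e. relation, coded via pairing). -/
def Numbering.seqThy (g : Numbering L) (j i : ℕ) : L.Theory :=
  {φ | Nat.pair i (g.code φ) ∈ WSet j}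

/-- `U` is effectively uniformly essentially `X`-incomplete. -/
def EffUnifEssXIncomplete (g : Numbering L) (U : L.Theory) (X : Set L.Sentence) : Prop :=
  ∃ Φ : ℕ →. ℕ, Partrec Φ ∧ ∀ j,
    (∀ i, Consistent (g.seqThy j i) ∧ Thms U ⊆ Thms (g.seqThy j i)) →
    ∃ n ∈ Φ j, ∃ φ : L.Sentence, g.code φ = n ∧ φ ∈ X ∧
      ∀ i, Independent (g.seqThy j i) φ

/-!
Given a computable sequence of consistent extensions `T i` of `U`, the set of sentences provable in
some `T i` and the set of sentences refutable in some `T i` weakly biseparate `U_p` and `U_r`; a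
sentence outside both is independent of every `T i`.

Conversely, if `Z` and `W` weakly biseparate `U_p` and `U_r`, then every sentence of
`V = Z ∪ {¬χ | χ ∈ W}` is consistent with `U`. Let `T n` be `U` together with the `n`-th sentence if
that sentence lies in `V`, and `T n = U` otherwise. Every member of `V` is a theorem of some `T n`,
so if `φ` is independent of every `T n`, then neither `φ` nor `¬φ` is in `V`; hence `φ ∉ Z ∪ W`.
-/

section RecursivelyEnumerable

open Nat.Partrec (Code)

variable {α β : Type*} [Primcodable α] [Primcodable β]

theorem rePred_comp {p : α → Prop} (hp : REPred p) {f : β → α} (hf : Computable f) :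
    REPred fun b => p (f b) :=
  Partrec.comp hp hf

theorem rePred_and {p q : α → Prop} (hp : REPred p) (hq : REPred q) :
    REPred fun a => p a ∧ q a :=
  (Partrec.dom_re (hp.bind (hq.comp Computable.fst).to₂)).of_eq fun a => by
    simp only [Part.bind_dom, Part.assert, Part.some_dom, exists_prop, and_true]

theorem rePred_or {p q : α → Prop} (hp : REPred p) (hq : REPred q) :
    REPred fun a => p a ∨ q a := by
  obtain ⟨k, hk, hdom⟩ := Partrec.merge' hp hq
  exact hk.dom_re.of_eq fun a => by
    simpa only [Part.assert, Part.some_dom, exists_prop, and_true] using (hdom a).2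

theorem rePred_eq {f h : α → ℕ} (hf : Computable f) (hh : Computable h) :
    REPred fun a => f a = h a :=
  rePred_comp (p := fun x : ℕ × ℕ => x.1 = x.2)
    (ComputablePred.to_re Primrec.eq.computablePred) (hf.pair hh)

theorem exists_code_eval_dom_iff {p : α → Prop} (hp : REPred p) :
    ∃ c : Code, ∀ a, (c.eval (Encodable.encode a)).Dom ↔ p a := by
  obtain ⟨c, hc⟩ := Code.exists_code.1 hp
  refine ⟨c, fun a => ?_⟩
  simp only [hc, Encodable.encodek, Part.coe_some, Part.bind_some, Part.map_Dom, Part.assert,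
    Part.some_dom, exists_prop, and_true]

theorem rePred_exists {p : α × ℕ → Prop} (hp : REPred p) : REPred fun a => ∃ n, p (a, n) := by
  obtain ⟨c, hc⟩ := exists_code_eval_dom_iff hp
  -- Dovetailing: one number `k` codes both the candidate witness and the number of steps.
  have hsearch : Computable₂ fun (a : α) (k : ℕ) =>
      c.evaln k.unpair.2 (Encodable.encode (a, k.unpair.1)) :=
    have hk : Computable fun x : α × ℕ => x.2.unpair := Computable.unpair.comp Computable.snd
    Code.primrec_evaln.to_comp.comp <|
      ((Computable.snd.comp hk).pair (Computable.const c)).pair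
        (Computable.encode.comp (Computable.fst.pair (Computable.fst.comp hk)))
  refine (Partrec.rfindOpt hsearch).dom_re.of_eq fun a => ?_
  have hpeval (n : ℕ) : p (a, n) ↔ ∃ m k, m ∈ c.evaln k (Encodable.encode (a, n)) := by
    simp only [← hc (a, n), Part.dom_iff_mem, Code.evaln_complete]
  rw [Nat.rfindOpt_dom]
  constructor
  · rintro ⟨k, m, hm⟩
    exact ⟨k.unpair.1, (hpeval _).2 ⟨m, k.unpair.2, hm⟩⟩
  · rintro ⟨n, hn⟩
    obtain ⟨m, k, hm⟩ := (hpeval n).1 hn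
    exact ⟨Nat.pair n k, m, by simpa only [Nat.unpair_pair] using hm⟩

theorem rePred_mem_WSet {f i : α → ℕ} (hf : Computable f) (hi : Computable i) :
    REPred fun a => f a ∈ WSet (i a) :=
  (Code.eval_part.comp ((Computable.ofNat Code).comp hi) hf).dom_re

theorem exists_computable_mem_WSet_iff {p : α × ℕ → Prop} (hp : REPred p) :
    ∃ f : α → ℕ, Computable f ∧ ∀ a n, n ∈ WSet (f a) ↔ p (a, n) := by
  obtain ⟨c, hc⟩ := exists_code_eval_dom_iff hp
  refine ⟨fun a => Encodable.encode (c.curry (Encodable.encode a)), ?_, fun a n => ?_⟩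
  · exact Computable.encode.comp <|
      Code.primrec₂_curry.to_comp.comp (Computable.const c) Computable.encode
  · simp only [WSet, Set.mem_ofPred_eq, Denumerable.ofNat_encode, Code.eval_curry]
    exact hc (a, n)

end RecursivelyEnumerable

section Provability

variable {U V T : L.Theory} {φ : L.Sentence}

theorem thms_mono (h : U ⊆ T) : Thms U ⊆ Thms T :=
  fun _ => Theory.models_of_models_theory fun _ hψ => Theory.models_sentence_of_mem (h hψ)

theorem Consistent.mono (hT : Consistent T) (h : U ⊆ T) : Consistent U :=
  fun hbot => hT (thms_mono h hbot)

theorem prv_not_not : Prv U ∼(∼φ) ↔ Prv U φ := by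
  simp only [Prv, Theory.models_sentence_iff, Sentence.realize_not, not_not]

theorem consistent_union_singleton (h : φ ∉ Refut U) : Consistent (U ∪ {φ}) := by
  intro hbot
  refine h (Theory.models_sentence_iff.2 fun M => (Sentence.realize_not M).2 fun hφ => ?_)
  have : M ⊨ U ∪ {φ} := Theory.model_union_iff.2 ⟨M.is_model, Theory.model_singleton_iff.2 hφ⟩
  exact hbot.realize_sentence M

theorem Consistent.disjoint_thms_refut (hU : Consistent U) : Disjoint (Thms U) (Refut U) :=
  Set.disjoint_left.2 fun _ hφ hnφ => hU <| Theory.models_sentence_iff.2 fun M =>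
    ((Sentence.realize_not M).1 (hnφ.realize_sentence M) (hφ.realize_sentence M)).elim

theorem weaklyBiseparate_iUnion_thms_refut {ι : Type*} [Nonempty ι] {T : ι → L.Theory}
    (hcon : ∀ i, Consistent (T i)) (hT : ∀ i, Thms U ⊆ Thms (T i)) :
    WeaklyBiseparate (⋃ i, Thms (T i)) (⋃ i, Refut (T i)) (Thms U) (Refut U) := by
  have hRefut (i : ι) : Refut U ⊆ Refut (T i) := fun _ hφ => hT i hφ
  have i₀ : ι := Classical.arbitrary ι
  refine ⟨(hT i₀).trans (Set.subset_iUnion (fun i => Thms (T i)) i₀),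
    (hRefut i₀).trans (Set.subset_iUnion (fun i => Refut (T i)) i₀), ?_, ?_⟩
  · rw [← Set.disjoint_iff_inter_eq_empty, Set.disjoint_iUnion_left]
    exact fun i => (hcon i).disjoint_thms_refut.mono_right (hRefut i)
  · rw [← Set.disjoint_iff_inter_eq_empty, Set.disjoint_iUnion_left]
    exact fun i => (hcon i).disjoint_thms_refut.symm.mono_right (hT i)

theorem WeaklyBiseparate.disjoint_union_image_not_refut {Z W : Set L.Sentence}
    (h : WeaklyBiseparate Z W (Thms U) (Refut U)) :
    Disjoint (Z ∪ BoundedFormula.not '' W) (Refut U) := by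
  obtain ⟨-, -, hZ, hW⟩ := h
  refine Set.disjoint_union_left.2 ⟨Set.disjoint_iff_inter_eq_empty.2 hZ, ?_⟩
  rw [Set.disjoint_image_left]
  exact (Set.disjoint_iff_inter_eq_empty.2 hW).mono_right fun _ => prv_not_not.1

end Provability

theorem weaklyBiseparate_image_iff {α β : Type*} {f : α → β} (hf : f.Injective)
    {Z W X Y : Set α} :
    WeaklyBiseparate (f '' Z) (f '' W) (f '' X) (f '' Y) ↔ WeaklyBiseparate Z W X Y := by
  simp only [WeaklyBiseparate, Set.image_subset_image_iff hf, ← Set.image_inter hf,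
    Set.image_eq_empty]

namespace Numbering

variable {g : Numbering L} {i : ℕ}

theorem mem_thy {φ : L.Sentence} : φ ∈ g.thy i ↔ g.code φ ∈ WSet i := by
  rw [thy, Equiv.image_symm_eq_preimage]
  rfl

theorem codes_thy : g.codes (g.thy i) = WSet i :=
  g.equiv.image_symm_image _

theorem weaklyBiseparate_thy_iff {j : ℕ} {X Y : Set L.Sentence} :
    WeaklyBiseparate (g.thy i) (g.thy j) X Y ↔
      WeaklyBiseparate (WSet i) (WSet j) (g.codes X) (g.codes Y) := by
  rw [← codes_thy (g := g), ← codes_thy (g := g)]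
  exact (weaklyBiseparate_image_iff g.equiv.injective).symm

theorem thy_thmIdx : g.thy (g.thmIdx i) = Thms (g.thy i) := by
  rw [thy, g.thmIdx_spec, Equiv.symm_image_image]
  rfl

theorem CEThy.exists_thy_eq {U : L.Theory} (hU : g.CEThy U) : ∃ i, g.thy i = U := by
  obtain ⟨i, hi⟩ := hU
  exact ⟨i, by rw [thy, ← hi, codes, Equiv.symm_image_image]⟩

end Numbering

/-- A family of sets of sentences is uniformly c.e. if membership in its members is a recursively
enumerable relation between parameters and codes of sentences. Uniformly c.e. families are those for
which an index of each member can be computed from the parameter. -/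
def UniformlyCE {α : Type*} [Primcodable α] (g : Numbering L) (T : α → Set L.Sentence) : Prop :=
  REPred fun x : α × ℕ => g.equiv.symm x.2 ∈ T x.1

section UniformlyCE

variable {α β : Type*} [Primcodable α] [Primcodable β] {g : Numbering L}

theorem uniformlyCE_thy : UniformlyCE g g.thy :=
  (rePred_mem_WSet Computable.snd Computable.fst).of_eq fun x => by
    rw [Numbering.mem_thy, Numbering.code, Equiv.apply_symm_apply]

theorem uniformlyCE_seqThy : UniformlyCE g fun x : ℕ × ℕ => g.seqThy x.1 x.2 :=
  (rePred_mem_WSet (Primrec₂.natPair.to_comp.comp (Computable.snd.comp Computable.fst)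
    Computable.snd) (Computable.fst.comp Computable.fst)).of_eq fun x => by
      simp only [Numbering.seqThy, Numbering.code, Set.mem_ofPred_eq, Equiv.apply_symm_apply]

namespace UniformlyCE

theorem exists_thy_eq {T : α → L.Theory} (hT : UniformlyCE g T) :
    ∃ f : α → ℕ, Computable f ∧ ∀ a, g.thy (f a) = T a := by
  obtain ⟨f, hf, hfT⟩ := exists_computable_mem_WSet_iff hT
  refine ⟨f, hf, fun a => Set.ext fun φ => ?_⟩
  rw [Numbering.mem_thy, hfT, Numbering.code, Equiv.symm_apply_apply]

theorem exists_seqThy_eq {T : α × ℕ → L.Theory} (hT : UniformlyCE g T) :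
    ∃ f : α → ℕ, Computable f ∧ ∀ a n, g.seqThy (f a) n = T (a, n) := by
  have hpair : Computable fun x : α × ℕ => ((x.1, x.2.unpair.1), x.2.unpair.2) :=
    have hunpair : Computable fun x : α × ℕ => x.2.unpair := Computable.unpair.comp Computable.snd
    (Computable.fst.pair (Computable.fst.comp hunpair)).pair (Computable.snd.comp hunpair)
  obtain ⟨f, hf, hfT⟩ := exists_computable_mem_WSet_iff (rePred_comp hT hpair)
  refine ⟨f, hf, fun a n => Set.ext fun φ => ?_⟩
  simp only [Numbering.seqThy, Set.mem_ofPred_eq, hfT, Nat.unpair_pair, Numbering.code,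
    Equiv.symm_apply_apply]

theorem comp {T : α → Set L.Sentence} (hT : UniformlyCE g T) {f : β → α} (hf : Computable f) :
    UniformlyCE g fun b => T (f b) :=
  rePred_comp hT ((hf.comp Computable.fst).pair Computable.snd)

theorem union {S T : α → Set L.Sentence} (hS : UniformlyCE g S) (hT : UniformlyCE g T) :
    UniformlyCE g fun a => S a ∪ T a :=
  rePred_or hS hT

theorem iUnion {T : α × ℕ → Set L.Sentence} (hT : UniformlyCE g T) :
    UniformlyCE g fun a => ⋃ n, T (a, n) := by
  have hswap : Computable fun x : (α × ℕ) × ℕ => ((x.1.1, x.2), x.1.2) :=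
    ((Computable.fst.comp Computable.fst).pair Computable.snd).pair
      (Computable.snd.comp Computable.fst)
  exact (rePred_exists (rePred_comp hT hswap)).of_eq fun x => by
    rw [Set.mem_iUnion]

theorem thms {T : α → L.Theory} (hT : UniformlyCE g T) : UniformlyCE g fun a => Thms (T a) := by
  obtain ⟨f, hf, hfT⟩ := hT.exists_thy_eq
  have hThms : UniformlyCE g fun a => g.thy (g.thmIdx (f a)) :=
    uniformlyCE_thy.comp (g.thmIdx_comp.comp hf)
  simpa only [Numbering.thy_thmIdx, hfT] using hThms

theorem refut {T : α → L.Theory} (hT : UniformlyCE g T) : UniformlyCE g fun a => Refut (T a) :=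
  (rePred_comp hT.thms (Computable.fst.pair (g.neg_comp.comp Computable.snd))).of_eq fun x => by
    rw [Equiv.symm_apply_apply]
    rfl

theorem image_not {T : α → Set L.Sentence} (hT : UniformlyCE g T) :
    UniformlyCE g fun a => BoundedFormula.not '' T a := by
  have hmem : REPred fun x : (α × ℕ) × ℕ => g.equiv.symm x.2 ∈ T x.1.1 :=
    rePred_comp hT ((Computable.fst.comp Computable.fst).pair Computable.snd)
  have hnot : REPred fun x : (α × ℕ) × ℕ => g.equiv ∼(g.equiv.symm x.2) = x.1.2 :=
    rePred_eq (g.neg_comp.comp Computable.snd) (Computable.snd.comp Computable.fst)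
  refine (rePred_exists (rePred_and hmem hnot)).of_eq fun x => ?_
  refine g.equiv.symm.exists_congr fun n => and_congr_right fun _ => ?_
  exact g.equiv.eq_symm_apply.symm

theorem sep_code_eq {T : α → Set L.Sentence} (hT : UniformlyCE g T) :
    UniformlyCE g fun x : α × ℕ => {ψ ∈ T x.1 | g.code ψ = x.2} :=
  (rePred_and (rePred_comp hT ((Computable.fst.comp Computable.fst).pair Computable.snd))
    (rePred_eq Computable.snd (Computable.snd.comp Computable.fst))).of_eq fun x => by
      simp only [Set.mem_sep_iff, Numbering.code, Equiv.apply_symm_apply]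

end UniformlyCE

end UniformlyCE

section Incompleteness

variable {g : Numbering L} {U V : L.Theory} {X : Set L.Sentence}

theorem EffXInseparable.effUnifEssXIncomplete (H : EffXInseparable g U X) :
    EffUnifEssXIncomplete g U X := by
  obtain ⟨Φ, hΦ, H⟩ := H
  obtain ⟨p, hp, hpThms⟩ := (uniformlyCE_seqThy (g := g)).thms.iUnion.exists_thy_eq
  obtain ⟨r, hr, hrRefut⟩ := (uniformlyCE_seqThy (g := g)).refut.iUnion.exists_thy_eq
  refine ⟨fun j => Φ (p j) (r j), hΦ.comp hp hr, fun j hj => ?_⟩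
  have hsep : WeaklyBiseparate (g.thy (p j)) (g.thy (r j)) (Thms U) (Refut U) := by
    rw [hpThms, hrRefut]
    exact weaklyBiseparate_iUnion_thms_refut (fun i => (hj i).1) fun i => (hj i).2
  obtain ⟨_, hn, ⟨φ, hφX, rfl⟩, hφ⟩ := H _ _ (Numbering.weaklyBiseparate_thy_iff.1 hsep)
  refine ⟨_, hn, φ, rfl, hφX, fun i => ⟨fun h => hφ (.inl ?_), fun h => hφ (.inr ?_)⟩⟩
  · exact Numbering.mem_thy.1 (hpThms j ▸ Set.mem_iUnion_of_mem i h)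
  · exact Numbering.mem_thy.1 (hrRefut j ▸ Set.mem_iUnion_of_mem i h)

/-- The theory `U`, extended by the sentence with code `n` if that sentence belongs to `V`. -/
def adjoinNth (g : Numbering L) (U V : L.Theory) (n : ℕ) : L.Theory :=
  U ∪ {ψ ∈ V | g.code ψ = n}

theorem consistent_adjoinNth (hU : Consistent U) (hV : Disjoint V (Refut U)) (n : ℕ) :
    Consistent (adjoinNth g U V n) := by
  by_cases hn : g.equiv.symm n ∈ V
  · refine (consistent_union_singleton (Set.disjoint_left.1 hV hn)).mono ?_
    refine Set.union_subset_union_right U ?_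
    rintro ψ ⟨-, rfl⟩
    exact (g.equiv.symm_apply_apply ψ).symm
  · refine hU.mono (Set.union_subset subset_rfl ?_)
    rintro ψ ⟨hψ, rfl⟩
    exact absurd ((g.equiv.symm_apply_apply ψ).symm ▸ hψ) hn

theorem prv_adjoinNth_code {φ : L.Sentence} (hφ : φ ∈ V) : Prv (adjoinNth g U V (g.code φ)) φ :=
  Theory.models_sentence_of_mem (.inr ⟨hφ, rfl⟩)

theorem uniformlyCE_adjoinNth (hU : g.CEThy U) :
    UniformlyCE g fun x : ℕ × ℕ => adjoinNth g U (g.thy x.1) x.2 := by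
  obtain ⟨u, rfl⟩ := hU.exists_thy_eq
  exact (uniformlyCE_thy.comp (Computable.const u)).union uniformlyCE_thy.sep_code_eq

theorem EffUnifEssXIncomplete.exists_partrec_of_disjoint_refut (hU : g.CEThy U)
    (hcon : Consistent U) (H : EffUnifEssXIncomplete g U X) :
    ∃ Ψ : ℕ →. ℕ, Partrec Ψ ∧ ∀ i, Disjoint (g.thy i) (Refut U) →
      ∃ φ ∈ X, g.code φ ∈ Ψ i ∧ φ ∉ g.thy i ∧ ∼φ ∉ g.thy i := by
  obtain ⟨Φ, hΦ, H⟩ := H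
  obtain ⟨f, hf, hfT⟩ := (uniformlyCE_adjoinNth hU).exists_seqThy_eq
  refine ⟨fun i => Φ (f i), hΦ.comp hf, fun i hi => ?_⟩
  obtain ⟨_, hn, φ, rfl, hφX, hφ⟩ := H (f i) fun n => by
    rw [hfT]
    exact ⟨consistent_adjoinNth hcon hi n, thms_mono Set.subset_union_left⟩
  simp only [hfT] at hφ
  exact ⟨φ, hφX, hn, fun h => (hφ _).1 (prv_adjoinNth_code h),
    fun h => (hφ _).2 (prv_adjoinNth_code h)⟩

theorem EffUnifEssXIncomplete.effXInseparable (hU : g.CEThy U) (hcon : Consistent U)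
    (H : EffUnifEssXIncomplete g U X) : EffXInseparable g U X := by
  obtain ⟨Ψ, hΨ, H⟩ := H.exists_partrec_of_disjoint_refut hU hcon
  obtain ⟨v, hv, hvZW⟩ := ((uniformlyCE_thy.comp Computable.fst).union
    (uniformlyCE_thy.comp Computable.snd).image_not).exists_thy_eq (g := g)
  refine ⟨fun i j => Ψ (v (i, j)), hΨ.comp hv, fun i j hij => ?_⟩
  have hdisj : Disjoint (g.thy (v (i, j))) (Refut U) := by
    rw [hvZW]
    exact (Numbering.weaklyBiseparate_thy_iff.2 hij).disjoint_union_image_not_refut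
  obtain ⟨φ, hφX, hn, hφ, hnotφ⟩ := H _ hdisj
  rw [hvZW] at hφ hnotφ
  refine ⟨_, hn, ⟨φ, hφX, rfl⟩, ?_⟩
  rintro (hi | hj)
  · exact hφ (.inl (Numbering.mem_thy.2 hi))
  · exact hnotφ (.inr ⟨φ, Numbering.mem_thy.2 hj, rfl⟩)

end Incompleteness

/-- A consistent c.e. theory is effectively `X`-inseparable iff
it is effectively uniformly essentially `X`-incomplete. -/
theorem statement6 {L : FirstOrder.Language} (g : Numbering L) (U : L.Theory)
    (hU : g.CEThy U) (hcon : Consistent U) (X : Set L.Sentence) :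
    EffXInseparable g U X ↔ EffUnifEssXIncomplete g U X :=
  ⟨EffXInseparable.effUnifEssXIncomplete, EffUnifEssXIncomplete.effXInseparable hU hcon⟩

end PourEl
end
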